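/- Under the setup of the previous statement (reversible P with nonnegative eigenvalues, probability measures μ_j satisfying μ_j P = β_j μ_j + (1-β_j)μ_{j+1}, μ_1 = μ, μ_N = π, and Q the pure birth chain), for every t ≥ 0 and every probability distribution μ, μP^t = Σ_{j=1}^{N} Q^t(1,j) μ_j; consequently μP^t ≥ Q^t(1,N)·π componentwise. -/

import Mathlib

/-- The closure of the set of Markov matrices reversible with respect to a strictly
positive stationary distribution. -/
def RevClosure (N : ℕ) : Set (Matrix (Fin N) (Fin N) ℝ) :=
  closure {M | (∀ i j, 0 ≤ M i j) ∧ (∀ i, ∑ j, M i j = 1) ∧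
    ∃ p : Fin N → ℝ, (∀ i, 0 < p i) ∧ (∑ i, p i = 1) ∧
      ∀ i j, p i * M i j = p j * M j i}

/-!
Let `Λ` be the matrix whose rows are the `μ_j`. The recursion says `Λ * P = Q * Λ`, hence
`Λ * P ^ t = Q ^ t * Λ`, whose first row is the decomposition. Dropping all but the last term of it
gives the inequality, provided that `μ_j ≥ 0`. Solving the recursion,
`∏_{k < j} (1 - β_k) • μ_j = μ ∏_{k < j} (P - β_k)`, so it is enough that the products of the
`P - β_k` over the smallest eigenvalues be entrywise nonnegative. This is a theorem of Micchelli and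
Willoughby.

Consider first a nonnegative symmetric matrix `S`. Newton's formula writes the product of the
`S - a` over the smallest eigenvalues as a divided difference of `adj (X - S)` at the other ones.
The diagonal entries of `adj (X - S)` are characteristic polynomials of principal minors `B`, and
the entries off the diagonal are nonnegative combinations of entries of `adj (X - B)`. By Cauchy
interlacing the nodes dominate the eigenvalues of `B`, so that these divided differences are
nonnegative by induction on the size. A reversible matrix is conjugate to a symmetric one by a
positive diagonal matrix. The spectra of Markov matrices lie in a compact set, which allows passing
to the closure.
-/

section Development

open Polynomial Matrix

section LinearProd

variable {R : Type*} [CommRing R]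

/-- The monic polynomial `∏ a ∈ L, (X - a)` with prescribed list of roots. -/
noncomputable def linearProd (L : List R) : R[X] := (L.map fun a => X - C a).prod

@[simp]
theorem linearProd_nil : linearProd ([] : List R) = 1 := rfl

@[simp]
theorem linearProd_cons (a : R) (L : List R) :
    linearProd (a :: L) = (X - C a) * linearProd L :=
  List.prod_cons

theorem linearProd_ofFn {n : ℕ} (f : Fin n → R) :
    linearProd (List.ofFn f) = ∏ k, (X - C (f k)) := by
  rw [linearProd, List.map_ofFn, List.prod_ofFn]
  rfl

theorem linearProd_reverse (L : List R) : linearProd L.reverse = linearProd L :=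
  ((List.reverse_perm L).map _).prod_eq

theorem linearProd_take_succ_ofFn {n m : ℕ} (f : Fin n → R) (hm : m < n) :
    linearProd ((List.ofFn f).take (m + 1))
      = linearProd ((List.ofFn f).take m) * (X - C (f ⟨m, hm⟩)) := by
  simp [linearProd, List.take_add_one, hm]

theorem monic_linearProd (L : List R) : (linearProd L).Monic := by
  induction L with
  | nil => exact monic_one
  | cons a L ih => exact linearProd_cons a L ▸ (monic_X_sub_C a).mul ih

theorem natDegree_linearProd [Nontrivial R] (L : List R) :
    (linearProd L).natDegree = L.length := by
  induction L with
  | nil => simp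
  | cons a L ih =>
    rw [linearProd_cons, (monic_X_sub_C a).natDegree_mul (monic_linearProd L), ih,
      natDegree_X_sub_C, List.length_cons, add_comm]

theorem degree_linearProd [Nontrivial R] (L : List R) : (linearProd L).degree = L.length := by
  rw [degree_eq_natDegree (monic_linearProd L).ne_zero, natDegree_linearProd]

theorem roots_linearProd [IsDomain R] (L : List R) : (linearProd L).roots = (L : Multiset R) := by
  simpa [linearProd] using roots_multiset_prod_X_sub_C (L : Multiset R)

end LinearProd

section DividedDiff

variable {R : Type*} [CommRing R]

/-- The divided difference `f[a₁, …, aₖ]` of a polynomial at a list of nodes, in which repetitions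
are allowed: the coefficient of degree `k - 1` of the Hermite interpolation polynomial
`f %ₘ ∏ (X - aᵢ)`. The empty divided difference is `0`, as `f %ₘ 1 = 0`. -/
noncomputable def dividedDiff (L : List R) : R[X] →ₗ[R] R :=
  lcoeff R (L.length - 1) ∘ₗ modByMonicHom (linearProd L)

theorem dividedDiff_apply (L : List R) (f : R[X]) :
    dividedDiff L f = (f %ₘ linearProd L).coeff (L.length - 1) :=
  rfl

@[simp]
theorem dividedDiff_nil (f : R[X]) : dividedDiff [] f = 0 := by
  simp [dividedDiff_apply]

theorem dividedDiff_singleton (a : R) (f : R[X]) : dividedDiff [a] f = f.eval a := by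
  simp [dividedDiff_apply, modByMonic_X_sub_C_eq_C_eval]

theorem X_sub_C_mul_modByMonic (a : R) (f : R[X]) {p : R[X]} (hp : p.Monic) :
    (X - C a) * f %ₘ ((X - C a) * p) = (X - C a) * (f %ₘ p) := by
  nontriviality R
  refine (div_modByMonic_unique (f /ₘ p) _ ((monic_X_sub_C a).mul hp) ⟨?_, ?_⟩).2
  · linear_combination (X - C a) * modByMonic_add_div f p
  · rw [mul_comm, (monic_X_sub_C a).degree_mul, hp.degree_mul, degree_X_sub_C, add_comm]
    exact WithBot.add_lt_add_left WithBot.one_ne_bot (degree_modByMonic_lt f hp)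

theorem dividedDiff_cons_X_sub_C_mul_self (a : R) (L : List R) (f : R[X]) :
    dividedDiff (a :: L) ((X - C a) * f) = dividedDiff L f := by
  nontriviality R
  rw [dividedDiff_apply, dividedDiff_apply, linearProd_cons,
    X_sub_C_mul_modByMonic a f (monic_linearProd L)]
  cases L with
  | nil => simp
  | cons b L =>
    have hdeg : (f %ₘ linearProd (b :: L)).coeff (L.length + 1) = 0 :=
      coeff_eq_zero_of_degree_lt <|
        (degree_modByMonic_lt f (monic_linearProd _)).trans_eq (degree_linearProd _)
    simp [sub_mul, coeff_X_mul, hdeg, -linearProd_cons]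

theorem dividedDiff_cons_X_sub_C_mul (a b : R) (L : List R) (f : R[X]) :
    dividedDiff (a :: L) ((X - C b) * f)
      = dividedDiff L f + (a - b) * dividedDiff (a :: L) f := by
  have hsplit : (X - C b) * f = (X - C a) * f + (a - b) • f := by
    rw [smul_eq_C_mul, C_sub]; ring
  rw [hsplit, map_add, map_smul, dividedDiff_cons_X_sub_C_mul_self, smul_eq_mul]

theorem dividedDiff_cons_cons_C (a b : R) (L : List R) (c : R) :
    dividedDiff (a :: b :: L) (C c) = 0 := by
  nontriviality R
  have hdeg : (C c).degree < (linearProd (a :: b :: L)).degree := by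
    rw [degree_linearProd]
    exact degree_C_le.trans_lt (by exact_mod_cast Nat.succ_pos _)
  rw [dividedDiff_apply, (modByMonic_eq_self_iff (monic_linearProd _)).2 hdeg]
  simp

theorem dividedDiff_C_nonneg [Preorder R] (L : List R) {c : R} (hc : 0 ≤ c) :
    0 ≤ dividedDiff L (C c) := by
  match L with
  | [] => simp
  | [a] => simpa [dividedDiff_singleton] using hc
  | a :: b :: L => rw [dividedDiff_cons_cons_C]

end DividedDiff

section Dominates

variable {α : Type*} [Preorder α]

/-- Entrywise domination `M[q] ≤ K[q]` of lists, at the indices `q` valid in both. It compares the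
nodes of a divided difference with the roots of the polynomial it is applied to. -/
def Dominates (K M : List α) : Prop :=
  ∀ (q : ℕ) (hK : q < K.length) (hM : q < M.length), M[q] ≤ K[q]

namespace Dominates

variable {a b : α} {K L M : List α}

theorem head_le (h : Dominates (a :: K) (b :: M)) : b ≤ a :=
  h 0 (by simp) (by simp)

theorem tail (h : Dominates (a :: K) (b :: M)) : Dominates K M := fun q hK hM =>
  h (q + 1) (by simpa using hK) (by simpa using hM)

theorem of_cons_right (h : Dominates K (b :: M)) (hM : (b :: M).SortedGE) : Dominates K M :=
  fun q hKq hMq =>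
    have hq : q + 1 < (b :: M).length := by simpa using hMq
    (hM.getElem_ge_getElem_of_le (hi := hq) q.le_succ).trans (h q hKq (q.lt_succ_self.trans hq))

theorem of_prefix (h : Dominates L M) (hK : K <+: L) : Dominates K M := fun q hKq hMq => by
  rw [hK.getElem hKq]
  exact h q _ hMq

end Dominates

end Dominates

section DividedDiffNonneg

variable {R : Type*} [CommRing R] [PartialOrder R]

/-- Nonnegativity of the divided differences of `f` at all lists of nodes dominating `M`. -/
def DividedDiffNonneg (M : List R) (f : R[X]) : Prop :=
  ∀ K, Dominates K M → 0 ≤ dividedDiff K f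

theorem dividedDiffNonneg_C (M : List R) {c : R} (hc : 0 ≤ c) : DividedDiffNonneg M (C c) :=
  fun K _ => dividedDiff_C_nonneg K hc

variable [IsOrderedRing R] {a : R} {M : List R} {f g : R[X]}

namespace DividedDiffNonneg

theorem add (hf : DividedDiffNonneg M f) (hg : DividedDiffNonneg M g) :
    DividedDiffNonneg M (f + g) := fun K hK => by
  rw [map_add]
  exact add_nonneg (hf K hK) (hg K hK)

theorem sum {ι : Type*} {s : Finset ι} {f : ι → R[X]}
    (hf : ∀ i ∈ s, DividedDiffNonneg M (f i)) : DividedDiffNonneg M (∑ i ∈ s, f i) := fun K hK => by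
  rw [map_sum]
  exact Finset.sum_nonneg fun i hi => hf i hi K hK

theorem smul (ha : 0 ≤ a) (hf : DividedDiffNonneg M f) : DividedDiffNonneg M (a • f) :=
  fun K hK => by
    rw [map_smul]
    exact mul_nonneg ha (hf K hK)

theorem X_sub_C_mul (hf : DividedDiffNonneg M f) (hM : (a :: M).SortedGE) :
    DividedDiffNonneg (a :: M) ((X - C a) * f)
  | [], _ => by simp
  | b :: K, hK => by
    rw [dividedDiff_cons_X_sub_C_mul]
    exact add_nonneg (hf K hK.tail)
      (mul_nonneg (sub_nonneg.2 hK.head_le) (hf (b :: K) (hK.of_cons_right hM)))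

end DividedDiffNonneg

theorem dividedDiffNonneg_linearProd (hM : M.SortedGE) : DividedDiffNonneg M (linearProd M) := by
  induction M with
  | nil => simpa using dividedDiffNonneg_C [] (zero_le_one' R)
  | cons a M ih => exact linearProd_cons a M ▸ (ih hM.pairwise.of_cons.sortedGE).X_sub_C_mul hM

end DividedDiffNonneg

section NewtonAdj

variable {R n : Type*} [CommRing R] [Fintype n] [DecidableEq n]

/-- Entrywise nonnegativity of the products `∏ a ∈ M, (S - a)` over all suffixes `M` of `L`: the
conclusion of the Micchelli–Willoughby theorem when `L` is the decreasing list of eigenvalues of a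
nonnegative symmetric matrix `S`. -/
def NewtonNonneg [Preorder R] (S : Matrix n n R) (L : List R) : Prop :=
  ∀ M, M <:+ L → ∀ i j, 0 ≤ aeval S (linearProd M) i j

theorem NewtonNonneg.of_suffix [Preorder R] {S : Matrix n n R} {K L : List R}
    (hL : NewtonNonneg S L) (hK : K <:+ L) : NewtonNonneg S K := fun M hM =>
  hL M (hM.trans hK)

/-- The matrix polynomial `(p(X) - p(S)) / (X - S)` for `p = ∏ a ∈ L, (X - a)`, computed by Newton's
recursion on `L`. When `p` is the characteristic polynomial of `S`, it is the adjugate of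
`X - S`. -/
noncomputable def newtonAdj (S : Matrix n n R) : List R → Matrix n n R[X]
  | [] => 0
  | a :: L => (X - C a) • newtonAdj S L + (aeval S (linearProd L)).map C

theorem newtonAdj_cons_apply (S : Matrix n n R) (a : R) (L : List R) (i j : n) :
    newtonAdj S (a :: L) i j
      = (X - C a) * newtonAdj S L i j + C (aeval S (linearProd L) i j) :=
  rfl

theorem map_C_aeval_X_sub_C_mul (S : Matrix n n R) (a : R) (f : R[X]) :
    (aeval S ((X - C a) * f)).map C = (S.map C - C a • 1) * (aeval S f).map C := by
  rw [map_mul, map_sub, aeval_X, aeval_C, Matrix.map_mul, Matrix.map_sub _ fun _ _ => C_sub,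
    Algebra.algebraMap_eq_smul_one, Matrix.map_smul' _ _ _ (fun _ _ => C_mul),
    Matrix.map_one _ C_0 C_1]

theorem charmatrix_mul_newtonAdj (S : Matrix n n R) (L : List R) :
    charmatrix S * newtonAdj S L
      = linearProd L • (1 : Matrix n n R[X]) - (aeval S (linearProd L)).map C := by
  induction L with
  | nil => simp [newtonAdj]
  | cons a L ih =>
    have hS : charmatrix S = (X : R[X]) • (1 : Matrix n n R[X]) - S.map C := by
      rw [charmatrix, smul_one_eq_diagonal]
      rfl
    rw [newtonAdj, mul_add, mul_smul_comm, ih, linearProd_cons, map_C_aeval_X_sub_C_mul, hS,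
      sub_mul (X • 1), sub_mul (S.map C), smul_one_mul, smul_one_mul]
    module

theorem newtonAdj_eq_adjugate {S : Matrix n n R} {L : List R} (h : S.charpoly = linearProd L) :
    newtonAdj S L = adjugate (charmatrix S) := by
  have hmul : charmatrix S * newtonAdj S L = S.charpoly • 1 := by
    rw [charmatrix_mul_newtonAdj, ← h, aeval_self_charpoly, Matrix.map_zero _ C_0, sub_zero]
  have hsmul : S.charpoly • newtonAdj S L = S.charpoly • adjugate (charmatrix S) := by
    rw [charpoly, ← smul_one_mul (charmatrix S).det, ← adjugate_mul, mul_assoc, hmul,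
      mul_smul_comm, mul_one, charpoly]
  ext1 i j
  exact (charpoly_monic S).isRegular.left (congrFun₂ hsmul i j)

theorem dividedDiff_newtonAdj (S : Matrix n n R) (a : R) (K L : List R) (i j : n) :
    dividedDiff (a :: K) (newtonAdj S (a :: K ++ L) i j) = aeval S (linearProd L) i j := by
  induction K generalizing a with
  | nil => simp [newtonAdj_cons_apply, dividedDiff_singleton]
  | cons b K ih =>
    rw [List.cons_append, newtonAdj_cons_apply, map_add, dividedDiff_cons_X_sub_C_mul_self, ih,
      dividedDiff_cons_cons_C, add_zero]

theorem dividedDiffNonneg_newtonAdj [PartialOrder R] [IsOrderedRing R] {S : Matrix n n R}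
    {L : List R} (hS : NewtonNonneg S L) (hL : L.SortedGE) (i j : n) :
    DividedDiffNonneg L (newtonAdj S L i j) := by
  induction L with
  | nil => simpa [newtonAdj] using dividedDiffNonneg_C [] (le_refl (0 : R))
  | cons a L ih =>
    have hLa := List.suffix_cons a L
    exact ((ih (hS.of_suffix hLa) hL.pairwise.of_cons.sortedGE).X_sub_C_mul hL).add
      (dividedDiffNonneg_C _ (hS L hLa i j))

end NewtonAdj

section PrincipalMinor

variable {R : Type*} [CommRing R] {n : ℕ}

theorem charmatrix_submatrix {m n : Type*} [Fintype m] [DecidableEq m] [Fintype n]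
    [DecidableEq n] (S : Matrix n n R)
    {f : m → n} (hf : Function.Injective f) :
    (charmatrix S).submatrix f f = charmatrix (S.submatrix f f) := by
  ext1 k l
  simp [charmatrix_apply, diagonal_apply, hf.eq_iff]

theorem adjugate_charmatrix_apply_self (S : Matrix (Fin (n + 1)) (Fin (n + 1)) R)
    (i : Fin (n + 1)) :
    adjugate (charmatrix S) i i = (S.submatrix i.succAbove i.succAbove).charpoly := by
  rw [adjugate_fin_succ_eq_det_submatrix, charmatrix_submatrix S i.succAbove_right_injective,
    Even.neg_one_pow ⟨_, rfl⟩, one_mul, charpoly]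

-- Column `i` of `(X - S) * adj (X - S) = det (X - S)`, off the diagonal, is a linear system with
-- matrix `X - B` for the minor `B`; multiply it by `adj (X - B)`.
theorem adjugate_charmatrix_succAbove_apply (S : Matrix (Fin (n + 1)) (Fin (n + 1)) R)
    (i : Fin (n + 1)) (l : Fin n) :
    adjugate (charmatrix S) (i.succAbove l) i
      = ∑ k, S (i.succAbove k) i •
          adjugate (charmatrix (S.submatrix i.succAbove i.succAbove)) l k := by
  set B := S.submatrix i.succAbove i.succAbove
  let v : Fin n → R[X] := fun l => adjugate (charmatrix S) (i.succAbove l) i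
  let s : Fin n → R[X] := fun k => C (S (i.succAbove k) i)
  have hv : charmatrix B *ᵥ v = B.charpoly • s := by
    ext1 k
    have h := congrFun₂ (mul_adjugate (charmatrix S)) (i.succAbove k) i
    rw [mul_apply, Fin.sum_univ_succAbove _ i, adjugate_charmatrix_apply_self,
      charmatrix_apply_ne _ _ _ (Fin.succAbove_ne i k), Matrix.smul_apply,
      one_apply_ne (Fin.succAbove_ne i k), smul_zero] at h
    rw [← charmatrix_submatrix S i.succAbove_right_injective]
    simp only [mulVec, dotProduct, submatrix_apply, Pi.smul_apply, smul_eq_mul, v, s]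
    linear_combination h
  have hsmul : B.charpoly • v = B.charpoly • (adjugate (charmatrix B) *ᵥ s) := by
    rw [← mulVec_smul, ← hv, mulVec_mulVec, adjugate_mul, smul_mulVec, one_mulVec, charpoly]
  calc v l = ∑ k, adjugate (charmatrix B) l k * s k :=
        (charpoly_monic B).isRegular.left (congrFun hsmul l)
    _ = ∑ k, S (i.succAbove k) i • adjugate (charmatrix B) l k :=
        Finset.sum_congr rfl fun k _ => by rw [smul_eq_C_mul, mul_comm]

end PrincipalMinor

section Rayleigh

variable {𝕜 E F : Type*} [RCLike 𝕜] [NormedAddCommGroup E] [InnerProductSpace 𝕜 E]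
  [FiniteDimensional 𝕜 E] [NormedAddCommGroup F] [InnerProductSpace 𝕜 F] [FiniteDimensional 𝕜 F]
  {m n : ℕ} {A : F →ₗ[𝕜] F} {T : E →ₗ[𝕜] E}

theorem re_inner_apply_self_eq_sum_eigenvalues_mul (hT : T.IsSymmetric)
    (hn : Module.finrank 𝕜 E = n) (x : E) :
    RCLike.re (inner 𝕜 (T x) x)
      = ∑ k, hT.eigenvalues hn k * ‖inner 𝕜 (hT.eigenvectorBasis hn k) x‖ ^ 2 := by
  rw [← (hT.eigenvectorBasis hn).sum_inner_mul_inner (T x) x, map_sum]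
  refine Finset.sum_congr rfl fun k _ => ?_
  rw [hT, hT.apply_eigenvectorBasis, inner_smul_right, mul_assoc, RCLike.re_ofReal_mul,
    inner_mul_symm_re_eq_norm, norm_mul, norm_inner_symm, sq]

theorem re_inner_apply_self_le_eigenvalues_mul (hT : T.IsSymmetric) (hn : Module.finrank 𝕜 E = n)
    {q : Fin n} {x : E} (hx : ∀ k < q, inner 𝕜 (hT.eigenvectorBasis hn k) x = 0) :
    RCLike.re (inner 𝕜 (T x) x) ≤ hT.eigenvalues hn q * ‖x‖ ^ 2 := by
  rw [re_inner_apply_self_eq_sum_eigenvalues_mul hT hn,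
    ← (hT.eigenvectorBasis hn).sum_sq_norm_inner_right x, Finset.mul_sum]
  refine Finset.sum_le_sum fun k _ => ?_
  rcases lt_or_ge k q with hk | hk
  · simp [hx k hk]
  · exact mul_le_mul_of_nonneg_right (hT.eigenvalues_antitone hn hk) (sq_nonneg _)

theorem eigenvalues_mul_le_re_inner_apply_self (hT : T.IsSymmetric) (hn : Module.finrank 𝕜 E = n)
    {q : Fin n} {x : E} (hx : ∀ k, q < k → inner 𝕜 (hT.eigenvectorBasis hn k) x = 0) :
    hT.eigenvalues hn q * ‖x‖ ^ 2 ≤ RCLike.re (inner 𝕜 (T x) x) := by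
  rw [re_inner_apply_self_eq_sum_eigenvalues_mul hT hn,
    ← (hT.eigenvectorBasis hn).sum_sq_norm_inner_right x, Finset.mul_sum]
  refine Finset.sum_le_sum fun k _ => ?_
  rcases lt_or_ge q k with hk | hk
  · simp [hx k hk]
  · exact mul_le_mul_of_nonneg_right (hT.eigenvalues_antitone hn hk) (sq_nonneg _)

-- Poincaré separation. Only `q + (m - 1 - q) < m` linear conditions put `y` above the `q`-th
-- eigenspace of `A` and `V y` below that of `T`.
theorem eigenvalues_le_of_re_inner_eq (hA : A.IsSymmetric) (hm : Module.finrank 𝕜 F = m)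
    (hT : T.IsSymmetric) (hn : Module.finrank 𝕜 E = n) (V : F →ₗᵢ[𝕜] E)
    (hAT : ∀ y, RCLike.re (inner 𝕜 (A y) y) = RCLike.re (inner 𝕜 (T (V y)) (V y)))
    {q : ℕ} (hqm : q < m) (hqn : q < n) :
    hA.eigenvalues hm ⟨q, hqm⟩ ≤ hT.eigenvalues hn ⟨q, hqn⟩ := by
  let Φ : F →ₗ[𝕜] (Finset.Iio (⟨q, hqn⟩ : Fin n) → 𝕜) × (Finset.Ioi (⟨q, hqm⟩ : Fin m) → 𝕜) :=
    (LinearMap.pi fun k => innerₛₗ 𝕜 (hT.eigenvectorBasis hn k.1) ∘ₗ V.toLinearMap).prod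
      (LinearMap.pi fun k => innerₛₗ 𝕜 (hA.eigenvectorBasis hm k.1))
  have hΦ : LinearMap.ker Φ ≠ ⊥ := by
    refine LinearMap.ker_ne_bot_of_finrank_lt ?_
    simp only [Module.finrank_prod, Module.finrank_fintype_fun_eq_card, Fintype.card_coe,
      Fin.card_Iio, Fin.card_Ioi, hm]
    omega
  obtain ⟨y, hy, hy0⟩ := Submodule.exists_mem_ne_zero_of_ne_bot hΦ
  have hTy : ∀ k < ⟨q, hqn⟩, inner 𝕜 (hT.eigenvectorBasis hn k) (V y) = 0 := fun k hk =>
    congrFun (congrArg Prod.fst hy) ⟨k, Finset.mem_Iio.2 hk⟩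
  have hAy : ∀ k, ⟨q, hqm⟩ < k → inner 𝕜 (hA.eigenvectorBasis hm k) y = 0 := fun k hk =>
    congrFun (congrArg Prod.snd hy) ⟨k, Finset.mem_Ioi.2 hk⟩
  refine le_of_mul_le_mul_right ?_ (pow_pos (norm_pos_iff.2 hy0) 2)
  calc hA.eigenvalues hm ⟨q, hqm⟩ * ‖y‖ ^ 2
      ≤ RCLike.re (inner 𝕜 (A y) y) := eigenvalues_mul_le_re_inner_apply_self hA hm hAy
    _ = RCLike.re (inner 𝕜 (T (V y)) (V y)) := hAT y
    _ ≤ hT.eigenvalues hn ⟨q, hqn⟩ * ‖V y‖ ^ 2 := re_inner_apply_self_le_eigenvalues_mul hT hn hTy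
    _ = hT.eigenvalues hn ⟨q, hqn⟩ * ‖y‖ ^ 2 := by rw [V.norm_map]

end Rayleigh

section Compression

variable {𝕜 m n : Type*} [RCLike 𝕜] [Fintype m] [DecidableEq m] [Fintype n]

theorem inner_toEuclideanLin_conjTranspose_mul (W A : Matrix n m 𝕜) (x y : EuclideanSpace 𝕜 m) :
    inner 𝕜 (toEuclideanLin (Wᴴ * A) x) y
      = inner 𝕜 (toEuclideanLin A x) (toEuclideanLin W y) := by
  classical
  rw [toLpLin_mul 2 2 2, toEuclideanLin_conjTranspose_eq_adjoint, LinearMap.comp_apply,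
    LinearMap.adjoint_inner_left]

variable [DecidableEq n]

theorem eigenvalues₀_conjTranspose_mul_mul_le {S : Matrix n n 𝕜} (hS : S.IsHermitian)
    {W : Matrix n m 𝕜} (hW : Wᴴ * W = 1) {B : Matrix m m 𝕜} (hB : B.IsHermitian)
    (hSB : Wᴴ * (S * W) = B) {q : ℕ}
    (hqm : q < Fintype.card m) (hqn : q < Fintype.card n) :
    hB.eigenvalues₀ ⟨q, hqm⟩ ≤ hS.eigenvalues₀ ⟨q, hqn⟩ := by
  let V : EuclideanSpace 𝕜 m →ₗᵢ[𝕜] EuclideanSpace 𝕜 n :=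
    (toEuclideanLin W).isometryOfInner fun x y => by
      rw [← inner_toEuclideanLin_conjTranspose_mul, hW, toLpLin_one, LinearMap.id_apply]
  refine eigenvalues_le_of_re_inner_eq _ _ _ _ V (fun y => congrArg RCLike.re ?_) hqm hqn
  rw [← hSB, inner_toEuclideanLin_conjTranspose_mul, toLpLin_mul 2 2 2]
  rfl

theorem eigenvalues₀_submatrix_le {S : Matrix n n 𝕜} (hS : S.IsHermitian) {f : m → n}
    (hf : Function.Injective f) {q : ℕ} (hqm : q < Fintype.card m) (hqn : q < Fintype.card n) :
    (hS.submatrix f).eigenvalues₀ ⟨q, hqm⟩ ≤ hS.eigenvalues₀ ⟨q, hqn⟩ := by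
  let W : Matrix n m 𝕜 := (1 : Matrix n n 𝕜).submatrix id f
  have hWA (A : Matrix n m 𝕜) : Wᴴ * A = A.submatrix f id := by
    rw [conjTranspose_submatrix, conjTranspose_one]
    exact one_submatrix_mul f (Equiv.refl n) A
  have hSW : S * W = S.submatrix id f := mul_submatrix_one (Equiv.refl n) f S
  refine eigenvalues₀_conjTranspose_mul_mul_le hS (W := W) ?_ _ ?_ hqm hqn
  · exact (hWA W).trans (submatrix_one f hf)
  · rw [hWA, hSW]
    rfl

end Compression

section MicchelliWilloughby

variable {m n : Type*} [Fintype m] [DecidableEq m] [Fintype n] [DecidableEq n]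

/-- `L` is the decreasing list of the eigenvalues of `S`, repeated according to their algebraic
multiplicity. -/
structure IsEigenvalueList (S : Matrix n n ℝ) (L : List ℝ) : Prop where
  sortedGE : L.SortedGE
  charpoly_eq : S.charpoly = linearProd L

namespace IsEigenvalueList

variable {S : Matrix n n ℝ} {K L : List ℝ}

theorem unique (hK : IsEigenvalueList S K) (hL : IsEigenvalueList S L) : K = L := by
  have hroots := congrArg roots (hK.charpoly_eq.symm.trans hL.charpoly_eq)
  rw [roots_linearProd, roots_linearProd, Multiset.coe_eq_coe] at hroots
  exact hroots.eq_of_sortedGE hK.sortedGE hL.sortedGE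

theorem mem_iff_isRoot (hL : IsEigenvalueList S L) {a : ℝ} : a ∈ L ↔ S.charpoly.IsRoot a := by
  rw [← mem_roots S.charpoly_monic.ne_zero, hL.charpoly_eq, roots_linearProd, Multiset.mem_coe]

theorem length_eq (hL : IsEigenvalueList S L) : L.length = Fintype.card n := by
  rw [← natDegree_linearProd L, ← hL.charpoly_eq, charpoly_natDegree_eq_dim]

theorem exists_ofFn_eq {N : ℕ} {S : Matrix (Fin N) (Fin N) ℝ} (hL : IsEigenvalueList S L) :
    ∃ b : Fin N → ℝ, List.ofFn b = L := by
  obtain rfl : N = L.length := by rw [hL.length_eq, Fintype.card_fin]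
  exact ⟨L.get, List.ofFn_get L⟩

end IsEigenvalueList

theorem isEigenvalueList_ofFn_eigenvalues₀ {S : Matrix n n ℝ} (hS : S.IsHermitian) :
    IsEigenvalueList S (List.ofFn hS.eigenvalues₀) where
  sortedGE := hS.eigenvalues₀_antitone.sortedGE_ofFn
  charpoly_eq := by
    rw [linearProd_ofFn, hS.charpoly_eq]
    exact (Fintype.equivOfCardEq (Fintype.card_fin (Fintype.card n))).symm.prod_comp
      fun k => X - C (hS.eigenvalues₀ k)

theorem dominates_submatrix {S : Matrix n n ℝ} (hS : S.IsHermitian) {f : m → n}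
    (hf : Function.Injective f) {L M : List ℝ} (hL : IsEigenvalueList S L)
    (hM : IsEigenvalueList (S.submatrix f f) M) : Dominates L M := by
  rw [hL.unique (isEigenvalueList_ofFn_eigenvalues₀ hS),
    hM.unique (isEigenvalueList_ofFn_eigenvalues₀ (hS.submatrix f))]
  intro q hL hM
  simpa using eigenvalues₀_submatrix_le hS hf _ _

theorem dividedDiffNonneg_adjugate_charmatrix {n : ℕ} {S : Matrix (Fin (n + 1)) (Fin (n + 1)) ℝ}
    (hS : ∀ i j, 0 ≤ S i j) (i j : Fin (n + 1)) {M : List ℝ}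
    (hM : IsEigenvalueList (S.submatrix j.succAbove j.succAbove) M)
    (hpos : NewtonNonneg (S.submatrix j.succAbove j.succAbove) M) :
    DividedDiffNonneg M (adjugate (charmatrix S) i j) := by
  rcases Fin.eq_self_or_eq_succAbove j i with rfl | ⟨l, rfl⟩
  · rw [adjugate_charmatrix_apply_self, hM.charpoly_eq]
    exact dividedDiffNonneg_linearProd hM.sortedGE
  · rw [adjugate_charmatrix_succAbove_apply, ← newtonAdj_eq_adjugate hM.charpoly_eq]
    exact .sum fun k _ => (dividedDiffNonneg_newtonAdj hpos hM.sortedGE l k).smul (hS _ _)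

theorem newtonNonneg_of_isHermitian {n : ℕ} {S : Matrix (Fin n) (Fin n) ℝ} (hS : S.IsHermitian)
    (hS0 : ∀ i j, 0 ≤ S i j) {L : List ℝ} (hL : IsEigenvalueList S L) : NewtonNonneg S L := by
  induction n generalizing L with
  | zero => exact fun _ _ i => i.elim0
  | succ n ih =>
    rintro R ⟨K, hK⟩ i j
    cases K with
    | nil =>
      rw [show R = L from hK, ← hL.charpoly_eq, aeval_self_charpoly]
      rfl
    | cons a K =>
      have hB : (S.submatrix j.succAbove j.succAbove).IsHermitian := hS.submatrix _
      have hM := isEigenvalueList_ofFn_eigenvalues₀ hB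
      rw [← dividedDiff_newtonAdj S a K R i j, hK, newtonAdj_eq_adjugate hL.charpoly_eq]
      exact dividedDiffNonneg_adjugate_charmatrix hS0 i j hM (ih hB (fun _ _ => hS0 _ _) hM) _
        ((dominates_submatrix hS j.succAbove_right_injective hL hM).of_prefix ⟨R, hK⟩)

end MicchelliWilloughby

section Intertwining

variable {R m n : Type*} [CommRing R] [Fintype m] [DecidableEq m] [Fintype n] [DecidableEq n]
  {Λ : Matrix m n R} {P : Matrix n n R} {Q : Matrix m m R}

theorem mul_pow_eq_pow_mul (h : Λ * P = Q * Λ) (k : ℕ) : Λ * P ^ k = Q ^ k * Λ := by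
  induction k with
  | zero => rw [pow_zero, pow_zero, Matrix.mul_one, Matrix.one_mul]
  | succ k ih =>
    rw [pow_succ, pow_succ, ← Matrix.mul_assoc, ih, Matrix.mul_assoc, h, Matrix.mul_assoc]

theorem mul_aeval_eq_aeval_mul (h : Λ * P = Q * Λ) (f : R[X]) :
    Λ * aeval P f = aeval Q f * Λ := by
  induction f using Polynomial.induction_on' with
  | add f g hf hg => rw [map_add, map_add, Matrix.mul_add, Matrix.add_mul, hf, hg]
  | monomial k c =>
    rw [← smul_X_eq_monomial, map_smul, map_smul, map_pow, map_pow, aeval_X, aeval_X,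
      Matrix.mul_smul, Matrix.smul_mul, mul_pow_eq_pow_mul h]

end Intertwining

section Reversible

variable {n : Type*} [Fintype n] [DecidableEq n] {p : n → ℝ} {M : Matrix n n ℝ}

/-- The conjugate of `M` by the diagonal matrix `√p`, which is symmetric when `M` satisfies detailed
balance with respect to `p`. -/
noncomputable def symmetrization (p : n → ℝ) (M : Matrix n n ℝ) : Matrix n n ℝ :=
  diagonal (fun i => √(p i)) * M * diagonal fun i => (√(p i))⁻¹

theorem symmetrization_apply (p : n → ℝ) (M : Matrix n n ℝ) (i j : n) :
    symmetrization p M i j = √(p i) * M i j * (√(p j))⁻¹ := by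
  rw [symmetrization, mul_diagonal, diagonal_mul]

theorem symmetrization_nonneg (hM : ∀ i j, 0 ≤ M i j) (i j : n) : 0 ≤ symmetrization p M i j := by
  rw [symmetrization_apply]
  have := hM i j
  positivity

theorem isHermitian_symmetrization (hp : ∀ i, 0 < p i) (hrev : ∀ i j, p i * M i j = p j * M j i) :
    (symmetrization p M).IsHermitian := by
  refine IsHermitian.ext fun i j => ?_
  rw [star_trivial, symmetrization_apply, symmetrization_apply]
  have hi := (Real.sqrt_pos.2 (hp i)).ne'
  have hj := (Real.sqrt_pos.2 (hp j)).ne'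
  field_simp
  rw [Real.sq_sqrt (hp i).le, Real.sq_sqrt (hp j).le, hrev j i]

theorem diagonal_inv_sqrt_mul_diagonal_sqrt (hp : ∀ i, 0 < p i) :
    diagonal (fun i => (√(p i))⁻¹) * diagonal (fun i => √(p i)) = 1 := by
  simp [diagonal_mul_diagonal, inv_mul_cancel₀ (Real.sqrt_pos.2 (hp _)).ne']

theorem charpoly_symmetrization (hp : ∀ i, 0 < p i) :
    (symmetrization p M).charpoly = M.charpoly := by
  rw [symmetrization, charpoly_mul_comm, ← mul_assoc, diagonal_inv_sqrt_mul_diagonal_sqrt hp,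
    one_mul]

theorem diagonal_sqrt_mul_eq_symmetrization_mul (hp : ∀ i, 0 < p i) :
    diagonal (fun i => √(p i)) * M = symmetrization p M * diagonal fun i => √(p i) := by
  rw [symmetrization, mul_assoc, diagonal_inv_sqrt_mul_diagonal_sqrt hp, mul_one]

theorem newtonNonneg_of_symmetrization (hp : ∀ i, 0 < p i) {L : List ℝ}
    (h : NewtonNonneg (symmetrization p M) L) : NewtonNonneg M L := fun R hR i j => by
  have hij := congrFun₂
    (mul_aeval_eq_aeval_mul (diagonal_sqrt_mul_eq_symmetrization_mul (M := M) hp)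
      (linearProd R)) i j
  rw [diagonal_mul, mul_diagonal] at hij
  exact nonneg_of_mul_nonneg_right (hij ▸ mul_nonneg (h R hR i j) (Real.sqrt_nonneg _))
    (Real.sqrt_pos.2 (hp i))

theorem exists_isEigenvalueList_of_reversible {N : ℕ} {p : Fin N → ℝ}
    {M : Matrix (Fin N) (Fin N) ℝ} (hM : ∀ i j, 0 ≤ M i j) (hp : ∀ i, 0 < p i)
    (hrev : ∀ i j, p i * M i j = p j * M j i) :
    ∃ L, IsEigenvalueList M L ∧ NewtonNonneg M L := by
  have hS := isHermitian_symmetrization hp hrev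
  have hL := isEigenvalueList_ofFn_eigenvalues₀ hS
  exact ⟨_, ⟨hL.sortedGE, charpoly_symmetrization hp ▸ hL.charpoly_eq⟩,
    newtonNonneg_of_symmetrization hp
      (newtonNonneg_of_isHermitian hS (symmetrization_nonneg hM) hL)⟩

theorem mem_Icc_of_isRoot_charpoly_of_mem_rowStochastic (hM : M ∈ rowStochastic ℝ n) {a : ℝ}
    (ha : M.charpoly.IsRoot a) : a ∈ Set.Icc (-1 : ℝ) 1 := by
  have hev : Module.End.HasEigenvalue (toLin' M) a := by
    rw [Module.End.hasEigenvalue_iff_isRoot_charpoly]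
    simpa using ha
  obtain ⟨k, hk⟩ := eigenvalue_mem_ball hev
  have hradius : ∑ j ∈ Finset.univ.erase k, ‖M k j‖ = 1 - M k k := by
    rw [← sum_row_of_mem_rowStochastic hM k, ← Finset.add_sum_erase _ _ (Finset.mem_univ k),
      add_sub_cancel_left]
    exact Finset.sum_congr rfl fun j _ => Real.norm_of_nonneg (nonneg_of_mem_rowStochastic hM)
  rw [hradius, Metric.mem_closedBall, Real.dist_eq, abs_le] at hk
  have hdiag : 0 ≤ M k k := nonneg_of_mem_rowStochastic hM
  constructor <;> linarith [hk.1, hk.2]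

end Reversible

section Closure

variable {k : ℕ} {n : Type*} [Fintype n] [DecidableEq n]

theorem aeval_linearProd (M : Matrix n n ℝ) (L : List ℝ) :
    aeval M (linearProd L) = (L.map fun a => M - a • (1 : Matrix n n ℝ)).prod := by
  rw [linearProd, map_list_prod, List.map_map]
  congr 2
  ext1 a
  simp [Algebra.algebraMap_eq_smul_one]

theorem continuous_aeval_linearProd_drop_ofFn (m : ℕ) :
    Continuous fun q : (Fin k → ℝ) × Matrix n n ℝ =>
      aeval q.2 (linearProd ((List.ofFn q.1).drop m)) := by
  simp_rw [aeval_linearProd, List.ofFn_eq_map, ← List.map_drop, List.map_map]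
  exact continuous_list_prod _ fun j _ => by
    dsimp only [Function.comp_apply]
    fun_prop

theorem isClosed_setOf_newtonNonneg_ofFn :
    IsClosed {q : (Fin k → ℝ) × Matrix n n ℝ | NewtonNonneg q.2 (List.ofFn q.1)} := by
  have hdrop (q : (Fin k → ℝ) × Matrix n n ℝ) : NewtonNonneg q.2 (List.ofFn q.1)
      ↔ ∀ m i j, 0 ≤ aeval q.2 (linearProd ((List.ofFn q.1).drop m)) i j :=
    ⟨fun h m => h _ (List.drop_suffix m _), fun h R hR => List.suffix_iff_eq_drop.1 hR ▸ h _⟩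
  simp only [hdrop, Set.ofPred_forall]
  exact isClosed_iInter fun m => isClosed_iInter fun i => isClosed_iInter fun j =>
    isClosed_le continuous_const ((continuous_aeval_linearProd_drop_ofFn m).matrix_elem i j)

theorem isEigenvalueList_ofFn_iff {b : Fin k → ℝ} {M : Matrix n n ℝ} :
    IsEigenvalueList M (List.ofFn b)
      ↔ Antitone b ∧ ∀ z : ℝ, (scalar n z - M).det = ∏ j, (z - b j) := by
  have heval (z : ℝ) : (linearProd (List.ofFn b)).eval z = ∏ j, (z - b j) := by
    simp [linearProd_ofFn, eval_prod]
  simp_rw [← heval, ← eval_charpoly]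
  exact ⟨fun h => ⟨h.sortedGE.antitone, fun z => by rw [h.charpoly_eq]⟩,
    fun h => ⟨h.1.sortedGE_ofFn, Polynomial.funext h.2⟩⟩

theorem isClosed_setOf_isEigenvalueList_ofFn :
    IsClosed {q : (Fin k → ℝ) × Matrix n n ℝ | IsEigenvalueList q.2 (List.ofFn q.1)} := by
  simp only [isEigenvalueList_ofFn_iff, Set.ofPred_and, Set.ofPred_forall]
  refine (isClosed_antitone.preimage continuous_fst).inter (isClosed_iInter fun z => ?_)
  exact isClosed_eq (continuous_const.sub continuous_snd).matrix_det (by fun_prop)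

theorem isClosed_setOf_exists_mem {X Y : Type*} [TopologicalSpace X] [TopologicalSpace Y]
    {K : Set X} (hK : IsCompact K) {Z : Set (X × Y)} (hZ : IsClosed Z) :
    IsClosed {y | ∃ x ∈ K, (x, y) ∈ Z} := by
  have : CompactSpace K := isCompact_iff_compactSpace.1 hK
  convert isClosedMap_snd_of_compactSpace _ (hZ.preimage
    (continuous_subtype_val.prodMap continuous_id : Continuous (Prod.map ((↑) : K → X) id))) using 1
  ext y
  simp

theorem newtonNonneg_of_mem_revClosure {N : ℕ} {P : Matrix (Fin N) (Fin N) ℝ}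
    (hP : P ∈ RevClosure N) {L : List ℝ} (hL : IsEigenvalueList P L) : NewtonNonneg P L := by
  have hclosed := isClosed_setOf_exists_mem (isCompact_Icc (a := (-1 : Fin N → ℝ)) (b := 1))
    ((isClosed_setOf_isEigenvalueList_ofFn (n := Fin N)).inter isClosed_setOf_newtonNonneg_ofFn)
  suffices h : P ∈ {M | ∃ b ∈ Set.Icc (-1 : Fin N → ℝ) 1, (b, M) ∈
      {q | IsEigenvalueList q.2 (List.ofFn q.1)} ∩ {q | NewtonNonneg q.2 (List.ofFn q.1)}} by
    obtain ⟨b, -, hb, hpos⟩ := h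
    exact hL.unique hb ▸ hpos
  refine closure_minimal ?_ hclosed hP
  rintro M ⟨hM0, hM1, p, hp, -, hrev⟩
  obtain ⟨L, hML, hpos⟩ := exists_isEigenvalueList_of_reversible hM0 hp hrev
  obtain ⟨b, rfl⟩ := hML.exists_ofFn_eq
  have hbd (k : Fin N) : b k ∈ Set.Icc (-1 : ℝ) 1 :=
    mem_Icc_of_isRoot_charpoly_of_mem_rowStochastic (mem_rowStochastic_iff_sum.2 ⟨hM0, hM1⟩)
      (hML.mem_iff_isRoot.1 (List.mem_ofFn.2 ⟨k, rfl⟩))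
  exact ⟨b, ⟨fun k => (hbd k).1, fun k => (hbd k).2⟩, hML, hpos⟩

end Closure

section PureBirth

variable {R : Type*} [CommRing R] {N : ℕ} {β : Fin N → R}

/-- The transition matrix of the pure birth chain which moves from `i` to `i + 1` with probability
`1 - β i` and otherwise stays put. The last row is a probability distribution only if its `β` is
`1`. -/
def pureBirth (β : Fin N → R) : Matrix (Fin N) (Fin N) R :=
  of fun i j => if j = i then β i else if (j : ℕ) = i + 1 then 1 - β i else 0

theorem sum_pureBirth_smul {E : Type*} [AddCommGroup E] [Module R E]
    (hlast : ∀ i : Fin N, (i : ℕ) + 1 = N → β i = 1) (i : Fin N) (f : ℕ → E) :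
    ∑ j, pureBirth β i j • f j = β i • f i + (1 - β i) • f (i + 1) := by
  have hsplit (j : Fin N) : pureBirth β i j • f j
      = (if j = i then β i • f i else 0)
        + if (j : ℕ) = i + 1 then (1 - β i) • f (i + 1) else 0 := by
    by_cases hij : j = i
    · simp [pureBirth, hij]
    · by_cases hsucc : (j : ℕ) = i + 1 <;> simp [pureBirth, hij, hsucc]
  simp_rw [hsplit, Finset.sum_add_distrib, Finset.sum_ite_eq', Finset.mem_univ, if_true]
  congr 1
  by_cases hi : (i : ℕ) + 1 < N
  · rw [Finset.sum_eq_single ⟨i + 1, hi⟩] <;> simp +contextual [Fin.ext_iff]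
  · simp [hlast i (by omega)]

theorem pureBirth_mem_rowStochastic [PartialOrder R] [IsOrderedRing R] (h0 : ∀ i, 0 ≤ β i)
    (h1 : ∀ i, β i ≤ 1) (hlast : ∀ i : Fin N, (i : ℕ) + 1 = N → β i = 1) :
    pureBirth β ∈ rowStochastic R (Fin N) := by
  refine mem_rowStochastic_iff_sum.2 ⟨fun i j => ?_, fun i => ?_⟩
  · rw [pureBirth, of_apply]
    split_ifs
    exacts [h0 i, sub_nonneg.2 (h1 i), le_rfl]
  · simpa using sum_pureBirth_smul hlast i fun _ => (1 : R)

end PureBirth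

section LocalEquilibria

variable {R n : Type*} [CommRing R] [Fintype n] [DecidableEq n] {N : ℕ} {P : Matrix n n R}
  {β : Fin N → R} {ν : ℕ → n → R}

/-- The relation `ν_j P = β_j ν_j + (1 - β_j) ν_{j+1}` between consecutive local equilibria of `P`.
Although `ν N` occurs in it, its coefficient vanishes when the last `β` is `1`. -/
def IsLocalEquilibria (P : Matrix n n R) (β : Fin N → R) (ν : ℕ → n → R) : Prop :=
  ∀ j : Fin N, ν j ᵥ* P = β j • ν j + (1 - β j) • ν (j + 1)

namespace IsLocalEquilibria

theorem vecMul_pow (h : IsLocalEquilibria P β ν) (hlast : ∀ i : Fin N, (i : ℕ) + 1 = N → β i = 1)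
    (t : ℕ) (i : Fin N) : ν i ᵥ* P ^ t = ∑ j, (pureBirth β ^ t) i j • ν j := by
  let Λ : Matrix (Fin N) n R := of fun j => ν j
  have hΛ : Λ * P = pureBirth β * Λ := by
    ext1 i x
    have hi := congrFun ((h i).trans (sum_pureBirth_smul hlast i ν).symm) x
    simpa [Λ, mul_apply, vecMul, dotProduct] using hi
  ext1 x
  simpa [Λ, mul_apply, vecMul, dotProduct] using congrFun₂ (mul_pow_eq_pow_mul hΛ t) i x

theorem eval_one_smul (h : IsLocalEquilibria P β ν) {m : ℕ} (hm : m ≤ N) :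
    (linearProd ((List.ofFn β).take m)).eval 1 • ν m
      = ν 0 ᵥ* aeval P (linearProd ((List.ofFn β).take m)) := by
  induction m with
  | zero => simp
  | succ m ih =>
    have hstep : ν m ᵥ* (P - β ⟨m, hm⟩ • (1 : Matrix n n R)) = (1 - β ⟨m, hm⟩) • ν (m + 1) := by
      rw [vecMul_sub, vecMul_smul, vecMul_one, h ⟨m, hm⟩, add_sub_cancel_left]
    rw [linearProd_take_succ_ofFn β hm, map_mul, ← vecMul_vecMul, ← ih (Nat.le_of_succ_le hm),
      map_sub, aeval_X, aeval_C, Algebra.algebraMap_eq_smul_one, smul_vecMul, hstep, eval_mul,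
      mul_smul, eval_sub, eval_X, eval_C]

end IsLocalEquilibria

theorem eval_linearProd_pos [LinearOrder R] [IsStrictOrderedRing R] {L : List R} {x : R}
    (hL : ∀ a ∈ L, a < x) : 0 < (linearProd L).eval x := by
  induction L with
  | nil => simp
  | cons a L ih =>
    simpa using mul_pos (sub_pos.2 (hL a List.mem_cons_self)) (ih fun b hb =>
      hL b (List.mem_cons_of_mem a hb))

theorem IsLocalEquilibria.nonneg [LinearOrder R] [IsStrictOrderedRing R]
    (h : IsLocalEquilibria P β ν) (hP : NewtonNonneg P (List.ofFn β).reverse) (hν : ∀ x, 0 ≤ ν 0 x)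
    (hβ : ∀ k : Fin N, (k : ℕ) + 1 < N → β k < 1) {m : ℕ} (hm : m < N) (x : n) : 0 ≤ ν m x := by
  have hpos : 0 < (linearProd ((List.ofFn β).take m)).eval 1 := by
    refine eval_linearProd_pos fun a ha => ?_
    obtain ⟨k, hk, rfl⟩ := List.mem_take_iff_getElem.1 ha
    simpa using hβ ⟨k, by omega⟩ (by simp at hk ⊢; omega)
  have hnonneg (y : n) : 0 ≤ aeval P (linearProd ((List.ofFn β).take m)) y x := by
    rw [← linearProd_reverse]
    exact hP _ (List.reverse_suffix.2 (List.take_prefix _ _)) y x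
  refine nonneg_of_mul_nonneg_right ?_ hpos
  rw [← smul_eq_mul, ← Pi.smul_apply, h.eval_one_smul hm.le]
  exact Finset.sum_nonneg fun y _ => mul_nonneg (hν y) (hnonneg y)

theorem IsLocalEquilibria.smul_le_vecMul_pow [PartialOrder R] [IsOrderedRing R]
    (h : IsLocalEquilibria P β ν) (hβ0 : ∀ i, 0 ≤ β i) (hβ1 : ∀ i, β i ≤ 1)
    (hlast : ∀ i : Fin N, (i : ℕ) + 1 = N → β i = 1) (hν : ∀ j : Fin N, ∀ x, 0 ≤ ν j x) (t : ℕ)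
    (i j : Fin N) : (pureBirth β ^ t) i j • ν j ≤ ν i ᵥ* P ^ t := by
  rw [h.vecMul_pow hlast]
  have hQt := pow_mem (pureBirth_mem_rowStochastic hβ0 hβ1 hlast) t
  exact Finset.single_le_sum (f := fun j : Fin N => (pureBirth β ^ t) i j • ν j)
    (fun j _ x => mul_nonneg (nonneg_of_mem_rowStochastic hQt) (hν j x)) (Finset.mem_univ j)

end LocalEquilibria

end Development

/-- Equation (2.2) of the paper: with `μ_j` the local equilibria and `Q` the pure
birth chain, `μ P^t = ∑_{j=1}^N Q^t(1,j) μ_j`, hence `μ P^t ≥ Q^t(1,N) π`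
componentwise.  (`μseq j` is the paper's `μ_{j+1}`, `β ⟨j⟩` is the paper's `β_{j+1}`.) -/
theorem local_equilibria_decomposition (N : ℕ) (hN : 2 ≤ N)
    (P : Matrix (Fin N) (Fin N) ℝ) (hPcl : P ∈ RevClosure N)
    (piv : Fin N → ℝ) (hpiv0 : ∀ i, 0 ≤ piv i) (hpiv1 : ∑ i, piv i = 1)
    (hstat : ∀ j, ∑ i, piv i * P i j = piv j)
    (hrev : ∀ i j, piv i * P i j = piv j * P j i)
    (β : Fin N → ℝ)
    (hchar : P.charpoly = ∏ j, (Polynomial.X - Polynomial.C (β j)))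
    (hmono : Monotone β) (hβ0 : ∀ j, 0 ≤ β j)
    (hβlt : ∀ j : Fin N, (j : ℕ) < N - 1 → β j < 1)
    (hβlast : ∀ j : Fin N, (j : ℕ) = N - 1 → β j = 1)
    (μ : Fin N → ℝ) (hμ0 : ∀ x, 0 ≤ μ x) (hμ1 : ∑ x, μ x = 1)
    (μseq : ℕ → Fin N → ℝ) (hμinit : μseq 0 = μ)
    (hrec : ∀ j, ∀ h : j < N - 1, ∀ y,
      ∑ x, μseq j x * P x y
        = β ⟨j, by omega⟩ * μseq j y + (1 - β ⟨j, by omega⟩) * μseq (j + 1) y)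
    (hμN : μseq (N - 1) = piv)
    (Q : Matrix (Fin N) (Fin N) ℝ)
    (hQ : ∀ i j : Fin N, Q i j =
      if j = i then β i
      else if (j : ℕ) = (i : ℕ) + 1 then 1 - β i else 0)
    (t : ℕ) (x : Fin N) :
    (∑ y, μ y * (P ^ t) y x)
        = ∑ j : Fin N, (Q ^ t) ⟨0, by omega⟩ j * μseq (j : ℕ) x ∧
    (Q ^ t) ⟨0, by omega⟩ ⟨N - 1, by omega⟩ * piv x ≤ ∑ y, μ y * (P ^ t) y x := by
  have hlast : ∀ i : Fin N, (i : ℕ) + 1 = N → β i = 1 := fun i hi => hβlast i (by omega)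
  have hlt : ∀ i : Fin N, (i : ℕ) + 1 < N → β i < 1 := fun i hi => hβlt i (by omega)
  have hle : ∀ i : Fin N, β i ≤ 1 := fun i =>
    (Nat.succ_le_of_lt i.2).lt_or_eq.elim (fun hi => (hlt i hi).le) fun hi => (hlast i hi).le
  have hequil : IsLocalEquilibria P β μseq := fun j => by
    rcases (Nat.succ_le_of_lt j.2).lt_or_eq with hj | hj
    · exact funext (hrec j (by omega))
    · rw [hlast j hj, sub_self, zero_smul, one_smul, add_zero,
        show (j : ℕ) = N - 1 by omega, hμN]
      exact funext hstat
  have heig : IsEigenvalueList P (List.ofFn β).reverse :=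
    ⟨List.sortedGE_reverse.2 hmono.sortedLE_ofFn, by
      rw [hchar, linearProd_reverse, linearProd_ofFn]⟩
  have hnonneg : ∀ j : Fin N, ∀ y, 0 ≤ μseq j y := fun j =>
    hequil.nonneg (newtonNonneg_of_mem_revClosure hPcl heig) (hμinit ▸ hμ0) hlt j.2
  obtain rfl : Q = pureBirth β := Matrix.ext hQ
  rw [← hμN, ← hμinit]
  constructor
  · simpa [Matrix.vecMul, dotProduct] using congrFun (hequil.vecMul_pow hlast t ⟨0, by omega⟩) x
  · exact hequil.smul_le_vecMul_pow hβ0 hle hlast hnonneg t ⟨0, by omega⟩ ⟨N - 1, by omega⟩ x
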